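/- For any d ≥ 3 and each j ∈ {1, 2, 3}, the partial trace over the j-th tensor factor of the density operator T_d = (1/d⁴)·I + (6/(d²(d−2)))·Q_d on ℂ^d ⊗ ℂ^d ⊗ ℂ^d equals the Werner state ρ_d = ((d+1)/d³)·I − (1/d²)·V_d on ℂ^d ⊗ ℂ^d, where Q_d = (1/6)·{ I − V_d⊗I − I⊗V_d − (I⊗V_d)(V_d⊗I)(I⊗V_d) + (I⊗V_d)(V_d⊗I) + (V_d⊗I)(I⊗V_d) }. -/

import Mathlib

open Matrix Kronecker

/-- The flip (swap) operator `V_d` on `ℂ^d ⊗ ℂ^d`, modeled as a matrix: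
`V_d (ψ₁ ⊗ ψ₂) = ψ₂ ⊗ ψ₁`. -/
def flipM (d : ℕ) : Matrix (Fin d × Fin d) (Fin d × Fin d) ℂ :=
  fun p q => if p.1 = q.2 ∧ p.2 = q.1 then 1 else 0

/-- `V_d ⊗ I` on `ℂ^d ⊗ ℂ^d ⊗ ℂ^d`: the Kronecker product `V_d ⊗ₖ I`, reindexed by the
associativity equivalence to the index type `Fin d × Fin d × Fin d`. -/
def V12 (d : ℕ) : Matrix (Fin d × Fin d × Fin d) (Fin d × Fin d × Fin d) ℂ :=
  Matrix.reindex (Equiv.prodAssoc (Fin d) (Fin d) (Fin d))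
    (Equiv.prodAssoc (Fin d) (Fin d) (Fin d))
    (flipM d ⊗ₖ (1 : Matrix (Fin d) (Fin d) ℂ))

/-- `I ⊗ V_d` on `ℂ^d ⊗ ℂ^d ⊗ ℂ^d`. -/
def V23 (d : ℕ) : Matrix (Fin d × Fin d × Fin d) (Fin d × Fin d × Fin d) ℂ :=
  (1 : Matrix (Fin d) (Fin d) ℂ) ⊗ₖ flipM d

/-- `Q_d = (1/6)·{ I − V_d⊗I − I⊗V_d − (I⊗V_d)(V_d⊗I)(I⊗V_d)
      + (I⊗V_d)(V_d⊗I) + (V_d⊗I)(I⊗V_d) }` on `ℂ^d ⊗ ℂ^d ⊗ ℂ^d`. -/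
noncomputable def Q (d : ℕ) : Matrix (Fin d × Fin d × Fin d) (Fin d × Fin d × Fin d) ℂ :=
  ((6 : ℂ)⁻¹) • ((1 : Matrix (Fin d × Fin d × Fin d) (Fin d × Fin d × Fin d) ℂ)
    - V12 d - V23 d - V23 d * V12 d * V23 d + V23 d * V12 d + V12 d * V23 d)


/-- The partial trace over the `j`-th tensor factor (`j = 0,1,2` for the first, second,
third factor) of an operator on `ℂ^d ⊗ ℂ^d ⊗ ℂ^d`, yielding an operator on `ℂ^d ⊗ ℂ^d`. -/
noncomputable def ptr (d : ℕ) (j : Fin 3)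
    (T : Matrix (Fin d × Fin d × Fin d) (Fin d × Fin d × Fin d) ℂ) :
    Matrix (Fin d × Fin d) (Fin d × Fin d) ℂ :=
  match j with
  | 0 => fun p q => ∑ k : Fin d, T (k, p.1, p.2) (k, q.1, q.2)
  | 1 => fun p q => ∑ k : Fin d, T (p.1, k, p.2) (q.1, k, q.2)
  | 2 => fun p q => ∑ k : Fin d, T (p.1, p.2, k) (q.1, q.2, k)

/-- The density source-operator `T_d = (1/d⁴)·I + (6/(d²(d−2)))·Q_d` on `ℂ^d ⊗ ℂ^d ⊗ ℂ^d`. -/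
noncomputable def Tdso (d : ℕ) : Matrix (Fin d × Fin d × Fin d) (Fin d × Fin d × Fin d) ℂ :=
  (((d : ℂ) ^ 4)⁻¹) • (1 : Matrix (Fin d × Fin d × Fin d) (Fin d × Fin d × Fin d) ℂ)
    + ((6 : ℂ) / ((d : ℂ) ^ 2 * ((d : ℂ) - 2))) • Q d

/-- The Werner state `ρ_d = ((d+1)/d³)·I − (1/d²)·V_d` on `ℂ^d ⊗ ℂ^d`. -/
noncomputable def werner (d : ℕ) : Matrix (Fin d × Fin d) (Fin d × Fin d) ℂ :=
  (((d : ℂ) + 1) / (d : ℂ) ^ 3) • (1 : Matrix (Fin d × Fin d) (Fin d × Fin d) ℂ)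
    - ((d : ℂ) ^ 2)⁻¹ • flipM d

/-- Entry formula for `V12`. -/
lemma V12_entry (d : ℕ) (a b c x y z : Fin d) :
    V12 d (a, b, c) (x, y, z) =
      (if a = y then 1 else 0) * (if b = x then 1 else 0) * (if c = z then 1 else 0) := by
  simp [V12, flipM, Matrix.one_apply, ite_and]
  split_ifs <;> simp_all

/-- Entry formula for `V23`. -/
lemma V23_entry (d : ℕ) (a b c x y z : Fin d) :
    V23 d (a, b, c) (x, y, z) =
      (if a = x then 1 else 0) * (if b = z then 1 else 0) * (if c = y then 1 else 0) := by
  simp [V23, flipM, Matrix.one_apply, ite_and]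
  split_ifs <;> simp_all

/-- Left multiplication by `V23` permutes the row index. -/
lemma V23_mul_entry (d : ℕ) (M : Matrix (Fin d × Fin d × Fin d) (Fin d × Fin d × Fin d) ℂ)
    (a b c : Fin d) (q : Fin d × Fin d × Fin d) :
    (V23 d * M) (a, b, c) q = M (a, c, b) q := by
  simp [Matrix.mul_apply, Fintype.sum_prod_type, V23_entry]

/-- Right multiplication by `V23` permutes the column index. -/
lemma mul_V23_entry (d : ℕ) (M : Matrix (Fin d × Fin d × Fin d) (Fin d × Fin d × Fin d) ℂ)
    (p : Fin d × Fin d × Fin d) (x y z : Fin d) :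
    (M * V23 d) p (x, y, z) = M p (x, z, y) := by
  simp [Matrix.mul_apply, Fintype.sum_prod_type, V23_entry]

/-- Entry formula for the identity on the triple product. -/
lemma one_entry (d : ℕ) (a b c x y z : Fin d) :
    (1 : Matrix (Fin d × Fin d × Fin d) (Fin d × Fin d × Fin d) ℂ) (a, b, c) (x, y, z) =
      (if a = x then 1 else 0) * (if b = y then 1 else 0) * (if c = z then 1 else 0) := by
  simp [Matrix.one_apply, ite_and]
  split_ifs <;> simp_all

/-- For any `d ≥ 3` and each `j ∈ {1,2,3}`, the partial trace over the `j`-th tensor factor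
of `T_d` equals the Werner state `ρ_d` on `ℂ^d ⊗ ℂ^d`. -/
theorem Tdso_partialTrace_eq_werner (d : ℕ) (hd : 3 ≤ d) (j : Fin 3) :
    ptr d j (Tdso d) = werner d := by
  have h0 : (d : ℂ) ≠ 0 := by
    have : d ≠ 0 := by omega
    exact_mod_cast this
  have h2 : (d : ℂ) - 2 ≠ 0 := by
    have : d ≠ 2 := by omega
    exact sub_ne_zero.mpr (by exact_mod_cast this)
  ext ⟨a, b⟩ ⟨x, y⟩
  have hw : werner d (a, b) (x, y) =
      ((d : ℂ) + 1) / (d : ℂ) ^ 3 * ((if a = x then 1 else 0) * (if b = y then 1 else 0))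
      - ((d : ℂ) ^ 2)⁻¹ * ((if a = y then 1 else 0) * (if b = x then 1 else 0)) := by
    simp [werner, flipM, Matrix.one_apply, ite_and]
    split_ifs <;> simp_all
  rw [hw]
  fin_cases j <;>
  · simp only [ptr, Tdso, Q, Matrix.add_apply, Matrix.sub_apply, Matrix.smul_apply, smul_eq_mul,
      mul_V23_entry, V23_mul_entry, V12_entry, V23_entry, one_entry]
    simp only [Finset.sum_add_distrib, Finset.sum_sub_distrib, ← Finset.mul_sum,
      ← Finset.sum_mul]
    simp
    split_ifs <;> simp_all <;> field_simp <;> ring
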